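/- arXiv:2112.01112 — 2 statements merged into one kernel-verified Lean document; each statement's English description precedes it below -/
import Mathlib

section
/- Let n ≥ 2 and let 𝒜 be a malnormal subgroup system of F_n. Then 𝒜 is proper at infinity: for every nontrivial g ∈ F_n, there exists a subgroup A of F_n with [A] ∈ 𝒜 and g^{+∞} ∈ ∂A if and only if there exists a subgroup A of F_n with [A] ∈ 𝒜 and g ∈ A. In particular, a nontrivial g ∈ F_n is 𝒜-peripheral if and only if g^{+∞} ∈ ∂A for some subgroup A with [A] ∈ 𝒜. -/
open scoped Classical
open MeasureTheory

noncomputable section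

namespace RelCurr

/-- The alphabet `𝔄 = ℬ ∪ ℬ⁻¹`: a letter is a generator together with a sign. -/
abbrev Letter (n : ℕ) := Fin n × Bool

/-- The inverse of a letter. -/
def linv {n : ℕ} (x : Letter n) : Letter n := (x.1, !x.2)

/-- The free group of rank `n` on the basis `Fin n`. -/
abbrev F (n : ℕ) := FreeGroup (Fin n)

/-- The reduced word of an element of `F n`. -/
def rword {n : ℕ} (g : F n) : List (Letter n) := FreeGroup.toWord g

/-- The length `|g|` of the reduced word of `g`. -/
def wlen {n : ℕ} (g : F n) : ℕ := (rword g).length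

/-- The single-letter element of `F n` given by a letter. -/
def letterE {n : ℕ} (b : Letter n) : F n := FreeGroup.mk [b]

/-- The conjugate subgroup `g A g⁻¹`. -/
def conjSub {n : ℕ} (g : F n) (A : Subgroup (F n)) : Subgroup (F n) :=
  Subgroup.map (MulAut.conj g).toMonoidHom A

/-- A subgroup `A` is malnormal if `xAx⁻¹ ∩ A = {1}` for every `x ∉ A`. -/
def Malnormal {n : ℕ} (A : Subgroup (F n)) : Prop :=
  ∀ x : F n, x ∉ A → conjSub x A ⊓ A = ⊥

/-- The word metric on the Cayley tree `T`. -/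
def dist' {n : ℕ} (x y : F n) : ℕ := wlen (x⁻¹ * y)

/-- The cyclically reduced length of `a`. -/
def cycLen {n : ℕ} (a : F n) : ℕ := sInf { m | ∃ h : F n, wlen (h⁻¹ * a * h) = m }

/-- The vertex set of the minimal `A`-invariant subtree `T_A` of the Cayley tree:
the union of the axes of the nontrivial elements of `A`. -/
def treeVerts {n : ℕ} (A : Subgroup (F n)) : Set (F n) :=
  { h | ∃ a ∈ A, a ≠ 1 ∧ wlen (h⁻¹ * a * h) = cycLen a }

/-- `γ_w ⊆ S`: every prefix of the reduced word of `w` lies in the vertex set `S`. -/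
def pathIn {n : ℕ} (w : F n) (S : Set (F n)) : Prop :=
  ∀ m ≤ wlen w, FreeGroup.mk ((rword w).take m) ∈ S

/-- An element is cyclically reduced if the last letter of its reduced word is not the
inverse of the first letter. -/
def CyclicallyReduced {n : ℕ} (w : F n) : Prop :=
  ∀ x y : Letter n, (rword w).head? = some x → (rword w).getLast? = some y → y ≠ linv x

/-- `v` is a length-one extension of `w`. -/
def LengthOneExt {n : ℕ} (w v : F n) : Prop :=
  ∃ b : Letter n, v = w * letterE b ∧ wlen v = wlen w + 1

/-- `a` is an extension of `w`: the reduced word of `w` is a proper prefix of that of `a`. -/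
def ExtensionOf {n : ℕ} (w a : F n) : Prop :=
  rword w <+: rword a ∧ wlen w < wlen a

/-- `g` is a proper power. -/
def IsProperPower {n : ℕ} (g : F n) : Prop := ∃ (h : F n) (k : ℕ), 2 ≤ k ∧ g = h ^ k

section System

variable {n r : ℕ} (A : Fin r → Subgroup (F n))

/-- `[B] ∈ 𝒜`, i.e. `B` is a conjugate of one of the subgroups of the system. -/
def InSystem (B : Subgroup (F n)) : Prop := ∃ (i : Fin r) (g : F n), B = conjSub g (A i)

/-- The family `A` represents a subgroup system: finite rank subgroups distinct
from `{1}` and `F n`. -/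
def IsSystem : Prop := (∀ i, (A i).FG) ∧ (∀ i, A i ≠ ⊥) ∧ (∀ i, A i ≠ ⊤)

/-- The subgroup system is malnormal. -/
def SystemMalnormal : Prop :=
  (∀ i, Malnormal (A i)) ∧
  ∀ B₁ B₂ : Subgroup (F n), InSystem A B₁ → InSystem A B₂ → B₁ ≠ B₂ → B₁ ⊓ B₂ = ⊥

/-- `g` is `𝒜`-peripheral: trivial or contained in a conjugate of one of the `A i`. -/
def Peripheral (g : F n) : Prop := g = 1 ∨ ∃ B, InSystem A B ∧ g ∈ B

/-- The diameter of the intersection of the trees of two distinct subgroups of the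
system is at most `L`. -/
def DiamBound (L : ℕ) : Prop :=
  ∀ B₁ B₂ : Subgroup (F n), InSystem A B₁ → InSystem A B₂ → B₁ ≠ B₂ →
    ∀ x ∈ treeVerts B₁ ∩ treeVerts B₂, ∀ y ∈ treeVerts B₁ ∩ treeVerts B₂, dist' x y ≤ L

/-- `B ∈ Γ_i`: `B` is a conjugate of `A i` whose tree contains the base point `1`. -/
def GammaMem (i : Fin r) (B : Subgroup (F n)) : Prop :=
  (∃ g : F n, B = conjSub g (A i)) ∧ (1 : F n) ∈ treeVerts B

/-- The finite set `𝒞` of words of length `L+2` whose path is contained in no tree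
`T_B` with `B ∈ Γ_i`, for every `i`. -/
def Ccal (L : ℕ) : Set (F n) :=
  { w | wlen w = L + 2 ∧ ∀ (i : Fin r) (B : Subgroup (F n)), GammaMem A i B →
      ¬ pathIn w (treeVerts B) }

/-- `F_n − 𝒜`: the words containing an element of `𝒞` as a contiguous subword. -/
def FmA (L : ℕ) : Set (F n) := { w | ∃ x ∈ Ccal A L, rword x <:+: rword w }

/-- `S_k`: words of length `k` not containing any element of `𝒞` as a subword. -/
def Sk (L k : ℕ) : Set (F n) := { w | wlen w = k ∧ w ∉ FmA A L }

end System

/-! ### The boundary of `F n` -/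

/-- An infinite reduced word. -/
def IsRed {n : ℕ} (ξ : ℕ → Letter n) : Prop := ∀ i, ξ (i + 1) ≠ linv (ξ i)

/-- The Gromov boundary `∂F_n`, realized as the space of infinite reduced words,
topologized as a subspace of the product space. -/
def Boundary (n : ℕ) : Type := { ξ : ℕ → Letter n // IsRed ξ }

instance {n : ℕ} : TopologicalSpace (Boundary n) :=
  instTopologicalSpaceSubtype

/-- The length-`m` prefix of a boundary point. -/
def bpre {n : ℕ} (ξ : Boundary n) (m : ℕ) : List (Letter n) :=
  (List.range m).map ξ.1

/-- The reduced word of `w` is a prefix of the infinite word `ξ`. -/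
def wordPrefixOf {n : ℕ} (w : F n) (ξ : Boundary n) : Prop :=
  bpre ξ (wlen w) = rword w

/-- The boundary (limit set) `∂A ⊆ ∂F_n` of a subgroup `A`. -/
def limitSet {n : ℕ} (A : Subgroup (F n)) : Set (Boundary n) :=
  { ξ | ∀ m : ℕ, ∃ a ∈ A, bpre ξ m <+: rword a }

/-- `ξ = g^{+∞}`: `ξ` is the limit of the reduced words of the powers of `g`. -/
def IsPosLimit {n : ℕ} (g : F n) (ξ : Boundary n) : Prop :=
  ∀ m : ℕ, ∃ N : ℕ, ∀ k ≥ N, bpre ξ m <+: rword (g ^ k)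

/-- The number of letters cancelled when concatenating the word `l` with the
infinite reduced word `ξ`. -/
def cancelLen {n : ℕ} (l : List (Letter n)) (ξ : ℕ → Letter n) : ℕ :=
  sSup { j | j ≤ l.length ∧ ∀ i < j, l.reverse[i]? = some (linv (ξ i)) }

/-- The sequence underlying the action of `g` on a boundary point: left multiplication
followed by cancellation. -/
def actSeq {n : ℕ} (g : F n) (ξ : ℕ → Letter n) : ℕ → Letter n :=
  fun m =>
    if h : m < (rword g).length - cancelLen (rword g) ξ then
      (rword g).get ⟨m, by omega⟩
    else ξ (m - ((rword g).length - cancelLen (rword g) ξ) + cancelLen (rword g) ξ)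

/-- The action of `F n` on its boundary: left multiplication followed by cancellation.
(The sequence `actSeq g ξ.1` is always reduced, so the first branch always applies.) -/
def bAct {n : ℕ} (g : F n) (ξ : Boundary n) : Boundary n :=
  if h : IsRed (actSeq g ξ.1) then ⟨actSeq g ξ.1, h⟩ else ξ

/-! ### The double boundary -/

/-- The diagonal action of `F n` on `Sym2 (∂F_n)`, whose restriction to the set of
non-diagonal classes is the action on the double boundary `∂²F_n`. -/
def dbAct {n : ℕ} (g : F n) : Sym2 (Boundary n) → Sym2 (Boundary n) := Sym2.map (bAct g)

/-- `∂²𝒜`: the classes `{ξ,η}` with both endpoints in `g·∂A_i = ∂(gA_ig⁻¹)` for some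
`i` and `g`. -/
def dblBndA {n r : ℕ} (A : Fin r → Subgroup (F n)) : Set (Sym2 (Boundary n)) :=
  { z | ∃ (i : Fin r) (g : F n) (ξ η : Boundary n), z = s(ξ, η) ∧
      ξ ∈ limitSet (conjSub g (A i)) ∧ η ∈ limitSet (conjSub g (A i)) }

/-- The double boundary `∂²(F_n,𝒜)` of `F n` relative to `𝒜`, as a subset of
`Sym2 (∂F_n)`: non-diagonal classes not lying in `∂²𝒜`. -/
def relSet {n r : ℕ} (A : Fin r → Subgroup (F n)) : Set (Sym2 (Boundary n)) :=
  { z | ¬ z.IsDiag } \ dblBndA A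

/-- The cylinder set `C(γ_w) ⊆ ∂²F_n` of the geodesic path from `1` to `w`. -/
def cylinder {n : ℕ} (w : F n) : Set (Sym2 (Boundary n)) :=
  { z | ∃ ξ η : Boundary n, z = s(ξ, η) ∧ ξ.1 0 ≠ η.1 0 ∧
      (wordPrefixOf w ξ ∨ wordPrefixOf w η) }

instance {n : ℕ} : MeasurableSpace (Sym2 (Boundary n)) := borel _

/-- The action of `g ∈ F n` on `∂²(F_n,𝒜)`. (The action of `F n` preserves
`∂²(F_n,𝒜)`, so the first branch always applies.) -/
def relAct {n r : ℕ} (A : Fin r → Subgroup (F n)) (g : F n) (z : ↥(relSet A)) :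
    ↥(relSet A) :=
  if h : dbAct g z.1 ∈ relSet A then ⟨dbAct g z.1, h⟩ else z

/-- The cylinder `C(γ_w)` as a subset of `∂²(F_n,𝒜)`. -/
def relCyl {n r : ℕ} (A : Fin r → Subgroup (F n)) (w : F n) : Set ↥(relSet A) :=
  Subtype.val ⁻¹' cylinder w

/-- The translated cylinder `g·C(γ_w)` as a subset of `∂²(F_n,𝒜)`. -/
def relCylG {n r : ℕ} (A : Fin r → Subgroup (F n)) (g w : F n) : Set ↥(relSet A) :=
  Subtype.val ⁻¹' (dbAct g '' cylinder w)

/-- A relative current on `(F_n,𝒜)`: an `F_n`-invariant Radon measure on the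
locally compact space `∂²(F_n,𝒜)` (finite on compacts, outer regular, inner regular
on open sets). -/
def IsRelCurrent {n r : ℕ} (A : Fin r → Subgroup (F n)) (μ : Measure ↥(relSet A)) : Prop :=
  (∀ (g : F n) (s : Set ↥(relSet A)), MeasurableSet s → μ (relAct A g ⁻¹' s) = μ s) ∧
  μ.Regular

/-- The `F_n`-orbit of a point of `Sym2 (∂F_n)`, inside `∂²(F_n,𝒜)`. -/
def orbitOf {n r : ℕ} (A : Fin r → Subgroup (F n)) (z : Sym2 (Boundary n)) :
    Set ↥(relSet A) :=
  { y | ∃ h : F n, (y : Sym2 (Boundary n)) = dbAct h z }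


/-!
The ray from `1` to a limit point of a finitely generated subgroup `H` runs within bounded distance
of `H` in the Cayley tree, i.e. inside finitely many cosets `H v`. If `ξ` is a limit point of two
such subgroups `H` and `K`, then infinitely many vertices of the ray lie in the same `H v` and the
same `K w`, so `H ∩ K` is nontrivial. For `K = ⟨g⟩` this says that `g^{+∞} ∈ ∂H` forces a power
`g ^ k` with `k ≠ 0` into `H`, and a malnormal subgroup contains every root of its nontrivial
elements. For the converse it remains to see that `g^{+∞}` exists: if `g = h c h⁻¹` with `c`
cyclically reduced, then the reduced word of `g ^ k` starts with `h c ^ k`.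
-/

section CayleyTree

open FreeGroup
open scoped Pointwise

variable {α : Type*}

lemma exists_prefix_mk_eq_of_red {L₁ L₂ p : List (α × Bool)} (h : Red L₁ L₂) (hp : p <+: L₂) :
    ∃ q, q <+: L₁ ∧ mk q = mk p := by
  induction h using Relation.ReflTransGen.head_induction_on with
  | refl => exact ⟨p, hp, rfl⟩
  | head hstep _ ih =>
    obtain ⟨q, hq, hqp⟩ := ih
    cases hstep with
    | @not u v x b =>
      rcases List.prefix_or_prefix_of_prefix hq (List.prefix_append u v) with hqu | ⟨w, rfl⟩
      · exact ⟨q, hqu.trans (List.prefix_append _ _), hqp⟩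
      · -- `q` ends after the cancelled pair, so the pair has to be put back.
        refine ⟨u ++ (x, b) :: (x, !b) :: w, ?_, (Quot.sound Red.Step.not).trans hqp⟩
        simpa only [List.prefix_append_right_inj, List.cons_prefix_cons, true_and] using hq

variable [DecidableEq α]

/-- The set of vertices of the geodesic from `1` to `x` in the Cayley tree. -/
def geodesic (x : FreeGroup α) : Set (FreeGroup α) := mk '' {p | p <+: x.toWord}

lemma geodesic_one : geodesic (1 : FreeGroup α) = {1} := by
  simp [geodesic, one_eq_mk]

lemma finite_geodesic (x : FreeGroup α) : (geodesic x).Finite := by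
  have hfin : {p | p <+: x.toWord}.Finite :=
    x.toWord.inits.toFinset.finite_toSet.subset fun p hp => by simpa using hp
  exact hfin.image mk

lemma geodesic_mul_subset (x y : FreeGroup α) :
    geodesic (x * y) ⊆ geodesic x ∪ x • geodesic y := by
  rintro _ ⟨p, hp, rfl⟩
  rw [Set.mem_ofPred_eq, toWord_mul] at hp
  obtain ⟨q, hq, hqp⟩ := exists_prefix_mk_eq_of_red reduce.red hp
  rw [← hqp]
  rcases List.prefix_or_prefix_of_prefix hq (List.prefix_append _ _) with hqx | ⟨w, rfl⟩
  · exact Or.inl ⟨q, hqx, rfl⟩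
  · refine Or.inr ⟨mk w, ⟨w, (List.prefix_append_right_inj _).mp hq, rfl⟩, ?_⟩
    simp only [smul_eq_mul, ← mul_mk, mk_toWord]

lemma exists_finite_geodesic_subset_mul {H : Subgroup (FreeGroup α)} (hH : H.FG) :
    ∃ V : Set (FreeGroup α), V.Finite ∧ ∀ x ∈ H, geodesic x ⊆ (H : Set (FreeGroup α)) * V := by
  obtain ⟨S, rfl⟩ := hH
  let T : Set (FreeGroup α) := insert 1 (S ∪ (S : Set (FreeGroup α))⁻¹)
  let V : Set (FreeGroup α) := ⋃ s ∈ T, geodesic s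
  have hT : T.Finite := (S.finite_toSet.union S.finite_toSet.inv).insert 1
  have hV : ∀ s ∈ T, geodesic s ⊆ V := fun s hs => Set.subset_biUnion_of_mem hs
  refine ⟨V, hT.biUnion fun s _ => finite_geodesic s, fun x hx => ?_⟩
  set H := Subgroup.closure (S : Set (FreeGroup α))
  have hmul : ∀ x ∈ H, ∀ s ∈ T, geodesic x ⊆ (H : Set (FreeGroup α)) * V →
      geodesic (x * s) ⊆ (H : Set (FreeGroup α)) * V := fun x hx s hs ih =>
    (geodesic_mul_subset x s).trans <| Set.union_subset ih <|
      (Set.smul_set_mono (hV s hs)).trans (Set.smul_set_subset_mul hx)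
  induction hx using Subgroup.closure_induction_right with
  | one =>
    exact (hV 1 (Set.mem_insert 1 _)).trans (Set.subset_mul_right V H.one_mem)
  | mul_right x hx s hs ih => exact hmul x hx s (by simp [T, hs]) ih
  | mul_inv_cancel x hx s hs ih => exact hmul x hx s⁻¹ (by simp [T, hs]) ih

lemma exists_prefix_toWord_pow {x : FreeGroup α} (hx : x ≠ 1) (m : ℕ) :
    ∃ L : List (α × Bool), L.length = m ∧ ∀ k ≥ m, L <+: (x ^ k).toWord := by
  set h := reduceCyclically.conjugator x.toWord with h_def
  set c := reduceCyclically x.toWord with c_def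
  have hc : c ≠ [] := by
    intro hc
    have hconj := reduceCyclically.conj_conjugator_reduceCyclically x.toWord
    rw [← h_def, ← c_def, hc, List.append_nil] at hconj
    rw [← mk_toWord (x := x), ← hconj, ← mul_mk, ← inv_mk, mul_inv_cancel] at hx
    exact hx rfl
  have hlen : m ≤ (h ++ (List.replicate m c).flatten).length := by
    have hmc := Nat.le_mul_of_pos_right m (List.length_pos_iff.mpr hc)
    simpa using hmc.trans (Nat.le_add_left _ h.length)
  refine ⟨(h ++ (List.replicate m c).flatten).take m, List.length_take_of_le hlen, ?_⟩
  rintro (_ | k) hk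
  · simp [Nat.le_zero.mp hk]
  · obtain ⟨d, hd⟩ := Nat.exists_eq_add_of_le hk
    rw [toWord_pow, reduceCyclically.reduce_flatten_replicate_succ isReduced_toWord, hd,
      List.replicate_add, List.flatten_append, ← List.append_assoc h,
      List.append_assoc _ _ (invRev h)]
    exact (List.take_prefix _ _).trans (List.prefix_append _ _)

end CayleyTree

section LimitPoints

open FreeGroup
open scoped Pointwise

variable {n : ℕ} {g : F n} {ξ : Boundary n} {H K : Subgroup (F n)}

lemma isRed_iff_isReduced {ξ : ℕ → Letter n} :
    IsRed ξ ↔ ∀ m, FreeGroup.IsReduced ((List.range m).map ξ) := by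
  have hlinv (x y : Letter n) : y ≠ linv x ↔ (x.1 = y.1 → x.2 = y.2) := by
    rcases x with ⟨i, _ | _⟩ <;> rcases y with ⟨j, _ | _⟩ <;> simp [linv, eq_comm]
  simp only [IsRed, FreeGroup.IsReduced, List.isChain_map, List.isChain_range, hlinv]
  exact ⟨fun hξ m i _ => hξ i, fun hξ i => hξ (i + 2) i (by lia)⟩

lemma isReduced_bpre (ξ : Boundary n) (m : ℕ) : FreeGroup.IsReduced (bpre ξ m) :=
  isRed_iff_isReduced.mp ξ.2 m

lemma length_bpre (ξ : Boundary n) (m : ℕ) : (bpre ξ m).length = m := by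
  simp [bpre]

lemma exists_bpre_eq {u : ℕ → List (Letter n)} (hred : ∀ m, FreeGroup.IsReduced (u m))
    (hlen : ∀ m, (u m).length = m) (hpre : ∀ m, u m <+: u (m + 1)) :
    ∃ ξ : Boundary n, ∀ m, bpre ξ m = u m := by
  have hsnoc (m : ℕ) : ∃ a, u (m + 1) = u m ++ [a] := by
    obtain ⟨s, hs⟩ := hpre m
    have hs_len : s.length = 1 := by
      have := congrArg List.length hs
      rw [List.length_append, hlen, hlen] at this
      lia
    obtain ⟨a, rfl⟩ := List.length_eq_one_iff.mp hs_len
    exact ⟨a, hs.symm⟩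
  choose ξ hξ using hsnoc
  have hu (m : ℕ) : (List.range m).map ξ = u m := by
    induction m with
    | zero => simpa using (List.length_eq_zero_iff.mp (hlen 0)).symm
    | succ m ih => rw [List.range_succ, List.map_append, ih, hξ, List.map_singleton]
  exact ⟨⟨ξ, isRed_iff_isReduced.mpr fun m => hu m ▸ hred m⟩, hu⟩

/-- The `m`-th vertex of the geodesic ray from `1` to `ξ` in the Cayley tree. -/
def rayVertex (ξ : Boundary n) (m : ℕ) : F n := mk (bpre ξ m)

lemma rayVertex_injective (ξ : Boundary n) : Function.Injective (rayVertex ξ) := by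
  intro j k hjk
  have hbpre := reduce.sound hjk
  rw [(isReduced_bpre ξ j).reduce_eq, (isReduced_bpre ξ k).reduce_eq] at hbpre
  simpa only [length_bpre] using congrArg List.length hbpre

lemma exists_finite_rayVertex_mem_mul (hH : H.FG) (hξ : ξ ∈ limitSet H) :
    ∃ V : Set (F n), V.Finite ∧ ∀ m, rayVertex ξ m ∈ (H : Set (F n)) * V := by
  obtain ⟨V, hV, hHV⟩ := exists_finite_geodesic_subset_mul hH
  refine ⟨V, hV, fun m => ?_⟩
  obtain ⟨x, hx, hpre⟩ := hξ m
  exact hHV x hx ⟨bpre ξ m, hpre, rfl⟩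

lemma inf_ne_bot_of_mem_limitSet (hH : H.FG) (hK : K.FG) (hξH : ξ ∈ limitSet H)
    (hξK : ξ ∈ limitSet K) : H ⊓ K ≠ ⊥ := by
  obtain ⟨V, hV, hHV⟩ := exists_finite_rayVertex_mem_mul hH hξH
  obtain ⟨W, hW, hKW⟩ := exists_finite_rayVertex_mem_mul hK hξK
  choose a ha v hv hav using hHV
  choose b hb w hw hbw using hKW
  obtain ⟨j, k, hjk, hvw⟩ :=
    (hV.prod hW).exists_lt_map_eq_of_forall_mem fun m => Set.mk_mem_prod (hv m) (hw m)
  obtain ⟨hvjk, hwjk⟩ := Prod.mk.inj hvw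
  have hmemH : rayVertex ξ j * (rayVertex ξ k)⁻¹ ∈ H := by
    rw [← hav j, ← hav k, hvjk]
    simpa using mul_mem (ha j) (inv_mem (ha k))
  have hmemK : rayVertex ξ j * (rayVertex ξ k)⁻¹ ∈ K := by
    rw [← hbw j, ← hbw k, hwjk]
    simpa using mul_mem (hb j) (inv_mem (hb k))
  intro hbot
  have hone := (Subgroup.eq_bot_iff_forall _).mp hbot _ ⟨hmemH, hmemK⟩
  exact hjk.ne (rayVertex_injective ξ (mul_inv_eq_one.mp hone))

lemma exists_isPosLimit (hg : g ≠ 1) : ∃ ξ : Boundary n, IsPosLimit g ξ := by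
  choose u hlen hpre using exists_prefix_toWord_pow hg
  have hred (m : ℕ) : FreeGroup.IsReduced (u m) := isReduced_toWord.infix (hpre m m le_rfl).isInfix
  have hmono (m : ℕ) : u m <+: u (m + 1) :=
    List.prefix_of_prefix_length_le (hpre m (m + 1) m.le_succ) (hpre (m + 1) (m + 1) le_rfl)
      (by rw [hlen, hlen]; exact m.le_succ)
  obtain ⟨ξ, hξ⟩ := exists_bpre_eq hred hlen hmono
  exact ⟨ξ, fun m => ⟨m, fun k hk => hξ m ▸ hpre m k hk⟩⟩

lemma IsPosLimit.mem_limitSet_of_pow_mem (hξ : IsPosLimit g ξ) {k : ℕ} (hk : k ≠ 0)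
    (hgk : g ^ k ∈ H) : ξ ∈ limitSet H := by
  intro m
  obtain ⟨N, hN⟩ := hξ m
  refine ⟨g ^ (k * N), ?_, hN _ (Nat.le_mul_of_pos_left N (Nat.pos_of_ne_zero hk))⟩
  rw [pow_mul]
  exact pow_mem hgk N

lemma IsPosLimit.mem_limitSet_iff_exists_pow_mem (hξ : IsPosLimit g ξ) (hH : H.FG) :
    ξ ∈ limitSet H ↔ ∃ k : ℕ, k ≠ 0 ∧ g ^ k ∈ H := by
  refine ⟨fun hξH => ?_, fun ⟨k, hk, hgk⟩ => hξ.mem_limitSet_of_pow_mem hk hgk⟩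
  have hfg : (Subgroup.zpowers g).FG := ⟨{g}, by simp [Subgroup.zpowers_eq_closure]⟩
  have hξg : ξ ∈ limitSet (Subgroup.zpowers g) :=
    hξ.mem_limitSet_of_pow_mem one_ne_zero (by simp)
  obtain ⟨x, ⟨hxH, j, rfl⟩, hne⟩ :=
    (Subgroup.bot_or_exists_ne_one _).resolve_left (inf_ne_bot_of_mem_limitSet hH hfg hξH hξg)
  refine ⟨j.natAbs, ?_, ?_⟩
  · intro hj
    exact hne (by simp [Int.natAbs_eq_zero.mp hj])
  · cases j <;> simpa using hxH

lemma IsPosLimit.mem_limitSet_iff_of_powSaturated (hξ : IsPosLimit g ξ) (hH : H.FG)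
    (hsat : H.PowSaturated) : ξ ∈ limitSet H ↔ g ∈ H := by
  rw [hξ.mem_limitSet_iff_exists_pow_mem hH]
  exact ⟨fun ⟨_, hk, hgk⟩ => (hsat hgk).resolve_left hk, fun hg => ⟨1, one_ne_zero, by simpa⟩⟩

end LimitPoints

section SubgroupSystems

variable {n r : ℕ} {A : Fin r → Subgroup (F n)} {B H : Subgroup (F n)}

lemma mem_conjSub_iff {x y : F n} : y ∈ conjSub x H ↔ x⁻¹ * y * x ∈ H :=
  Subgroup.mem_map_equiv (f := MulAut.conj x)

lemma fg_conjSub (x : F n) (hH : H.FG) : (conjSub x H).FG :=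
  (Subgroup.fg_iff_submonoid_fg _).mpr (((Subgroup.fg_iff_submonoid_fg H).mp hH).map _)

lemma powSaturated_conjSub (x : F n) (hH : H.PowSaturated) : (conjSub x H).PowSaturated := by
  intro k y hy
  have hconj : (x⁻¹ * y * x) ^ k = x⁻¹ * y ^ k * x := by
    simpa using conj_pow (a := x⁻¹) (b := y) (i := k)
  exact (hH (hconj ▸ mem_conjSub_iff.mp hy)).imp_right mem_conjSub_iff.mpr

lemma InSystem.fg (hB : InSystem A B) (hA : ∀ i, (A i).FG) : B.FG := by
  obtain ⟨i, x, rfl⟩ := hB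
  exact fg_conjSub x (hA i)

lemma InSystem.powSaturated (hB : InSystem A B) (hA : ∀ i, (A i).PowSaturated) :
    B.PowSaturated := by
  obtain ⟨i, x, rfl⟩ := hB
  exact powSaturated_conjSub x (hA i)

lemma Malnormal.powSaturated (hH : Malnormal H) : H.PowSaturated := by
  intro k g hgk
  rw [or_iff_not_imp_left]
  intro hk
  by_contra hg
  have hconj : g ^ k ∈ conjSub g H := mem_conjSub_iff.mpr <| by
    rwa [mul_assoc, (Commute.self_pow g k).symm.eq, inv_mul_cancel_left]
  have hone : g ^ k = 1 := Subgroup.mem_bot.mp (hH g hg ▸ ⟨hconj, hgk⟩)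
  exact hg ((pow_eq_one_iff_left hk).mp hone ▸ H.one_mem)

theorem statement_2_general (hfg : ∀ i, (A i).FG) (hsat : ∀ i, (A i).PowSaturated) :
    (∀ g : F n, g ≠ 1 →
        ((∃ ξ : Boundary n, IsPosLimit g ξ ∧ ∃ B, InSystem A B ∧ ξ ∈ limitSet B) ↔
          ∃ B, InSystem A B ∧ g ∈ B)) ∧
      ∀ g : F n, g ≠ 1 →
        (Peripheral A g ↔
          ∃ ξ : Boundary n, IsPosLimit g ξ ∧ ∃ B, InSystem A B ∧ ξ ∈ limitSet B) := by
  have proper (g : F n) (hg : g ≠ 1) :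
      (∃ ξ : Boundary n, IsPosLimit g ξ ∧ ∃ B, InSystem A B ∧ ξ ∈ limitSet B) ↔
        ∃ B, InSystem A B ∧ g ∈ B := by
    have hmem {ξ B} (hξ : IsPosLimit g ξ) (hB : InSystem A B) : ξ ∈ limitSet B ↔ g ∈ B :=
      hξ.mem_limitSet_iff_of_powSaturated (hB.fg hfg) (hB.powSaturated hsat)
    constructor
    · rintro ⟨ξ, hξ, B, hB, hξB⟩
      exact ⟨B, hB, (hmem hξ hB).mp hξB⟩
    · rintro ⟨B, hB, hgB⟩
      obtain ⟨ξ, hξ⟩ := exists_isPosLimit hg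
      exact ⟨ξ, hξ, B, hB, (hmem hξ hB).mpr hgB⟩
  refine ⟨proper, fun g hg => ?_⟩
  rw [proper g hg, Peripheral, or_iff_right hg]

end SubgroupSystems

/-- A malnormal subgroup system is proper at infinity; in particular a nontrivial
element is peripheral iff its positive limit point lies in the boundary of a subgroup
of the system. -/
theorem statement_2 (n r : ℕ) (hn : 2 ≤ n) (A : Fin r → Subgroup (F n))
    (hsys : IsSystem A) (hmal : SystemMalnormal A) :
    (∀ g : F n, g ≠ 1 →
        ((∃ ξ : Boundary n, IsPosLimit g ξ ∧ ∃ B, InSystem A B ∧ ξ ∈ limitSet B) ↔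
          ∃ B, InSystem A B ∧ g ∈ B)) ∧
      ∀ g : F n, g ≠ 1 →
        (Peripheral A g ↔
          ∃ ξ : Boundary n, IsPosLimit g ξ ∧ ∃ B, InSystem A B ∧ ξ ∈ limitSet B) :=
  statement_2_general hsys.1 fun i => (hmal.1 i).powSaturated

end RelCurr
end
end

section
/- Let n ≥ 2 and let 𝒜 = {[A₁],…,[A_r]} be a malnormal subgroup system of F_n, with L, Γ_i and 𝒞 as in the context. Then the finite set 𝒞 is nonempty, and: (1) every g ∈ F_n with |g| ≥ L+2 such that γ_g is not contained in T_B for any B ∈ ⋃_{i=1}^r Γ_i contains an element of 𝒞 as a subword (i.e. g ∈ F_n − 𝒜); in particular, every non-𝒜-peripheral cyclically reduced g ∈ F_n has a power g^m (m ≥ 1) whose reduced word contains the reduced word of an element of 𝒞 as a contiguous subword; (3) if w ∈ F_n contains an element of 𝒞 as a subword, then w ∉ A_i for every i ∈ {1,…,r}. -/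
/-!
A vertex `h` lies on the axis of `a` exactly when the reduced word of `h⁻¹ a h` is cyclically
reduced. Hence `T_A` is convex: if a segment `l` joins the axis of `a ∈ A` to that of `b ∈ A` and
meets `T_A` only in its endpoints, then `a b` is cyclically reduced up to conjugacy and its axis
runs along `l`. So for `1 ∈ T_B` the path of `w` lies in `T_B` as soon as `w ∈ T_B`, and `𝒞`
consists of the words `w` of length `L + 2` such that no tree of the system contains both `1` and
`w`.

Two trees that share vertices at distance greater than `L` are equal, so trees containing
overlapping subwords of length `L + 2` of a long word coincide; thus a word of length at least
`L + 2` contains an element of `𝒞` if and only if no tree of the system contains both its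
endpoints. If `g` is cyclically reduced and the path of `g ^ (L + 2)` lies in `T_B`, then `T_B`
and `g T_B` share vertices at distance `L + 1`, so `g` normalizes `B` and malnormality gives
`g ∈ B`. Finally, if `𝒞` were empty, every cyclically reduced element would therefore be peripheral;
applied to the words `a ^ (L + 1) d ^ (L + 1)` in basis elements, this puts the whole basis into
one subgroup of the system.
-/

open scoped Classical
open MeasureTheory

noncomputable section

namespace RelCurr

/-! ### Words and conjugation in a free group -/

section Words

open FreeGroup

variable {α : Type*} {l s : List (α × Bool)}

lemma isCyclicallyReduced_append_of_isReduced (hs : s ≠ []) (h : IsReduced (s ++ l ++ s)) :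
    IsCyclicallyReduced (l ++ s) := by
  rw [List.append_assoc, FreeGroup.IsReduced, List.isChain_append] at h
  obtain ⟨-, hls, hcyc⟩ := h
  rw [← List.getLast?_append_of_ne_nil l hs] at hcyc
  exact ⟨hls, hcyc⟩

lemma isCyclicallyReduced_append_comm (h : IsCyclicallyReduced (l ++ s)) :
    IsCyclicallyReduced (s ++ l) := by
  rcases eq_or_ne l [] with rfl | hl
  · simpa using h
  · exact isCyclicallyReduced_append_of_isReduced hl
      ((h.flatten_replicate 2).isReduced.infix ⟨[], s, by simp [List.replicate_succ]⟩)

lemma isCyclicallyReduced_of_forall_snd (h : ∀ x ∈ l, x.2 = true) : IsCyclicallyReduced l :=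
  ⟨List.Pairwise.isChain <| List.pairwise_of_forall_mem_list fun x hx y hy _ =>
      (h x hx).trans (h y hy).symm,
    fun x hx y hy _ => (h x (List.mem_of_getLast? hx)).trans (h y (List.mem_of_head? hy)).symm⟩

lemma isReduced_invRev (h : IsReduced l) : IsReduced (invRev l) := by
  classical
  rw [isReduced_iff_reduce_eq, reduce_invRev, h.reduce_eq]

variable [DecidableEq α] {g : FreeGroup α}

lemma toWord_mk_of_isReduced (h : IsReduced l) : (mk l).toWord = l :=
  toWord_mk.trans h.reduce_eq

lemma norm_pow_le (g : FreeGroup α) (k : ℕ) : (g ^ k).norm ≤ k * g.norm := by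
  induction k with
  | zero => simp
  | succ k ih =>
    calc (g ^ (k + 1)).norm ≤ (g ^ k).norm + g.norm := by
          rw [pow_succ]; exact FreeGroup.norm_mul_le _ _
      _ ≤ (k + 1) * g.norm := by linarith

lemma toWord_pow_of_isCyclicallyReduced (h : IsCyclicallyReduced g.toWord) (k : ℕ) :
    (g ^ k).toWord = (List.replicate k g.toWord).flatten :=
  (toWord_pow g k).trans (h.flatten_replicate k).isReduced.reduce_eq

lemma norm_pow_of_isCyclicallyReduced (h : IsCyclicallyReduced g.toWord) (k : ℕ) :
    (g ^ k).norm = k * g.norm := by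
  simp [FreeGroup.norm, toWord_pow_of_isCyclicallyReduced h]

lemma toWord_pow_prefix_toWord_pow (h : IsCyclicallyReduced g.toWord) {j k : ℕ} (hjk : j ≤ k) :
    (g ^ j).toWord <+: (g ^ k).toWord := by
  obtain ⟨i, rfl⟩ := Nat.exists_eq_add_of_le hjk
  rw [toWord_pow_of_isCyclicallyReduced h, toWord_pow_of_isCyclicallyReduced h,
    List.replicate_add, List.flatten_append]
  exact List.prefix_append _ _

-- Since `|g ^ k| = k |g|`, a shorter conjugate of `g` would have powers that are too short.
lemma norm_le_norm_conj (hg : IsCyclicallyReduced g.toWord) (h : FreeGroup α) :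
    g.norm ≤ (h⁻¹ * g * h).norm := by
  have pow_bound (k : ℕ) : k * g.norm ≤ 2 * h.norm + k * (h⁻¹ * g * h).norm := by
    have conj_back : h * (h⁻¹ * g * h) ^ k * h⁻¹ = g ^ k := by rw [← conj_pow]; group
    calc k * g.norm = (h * (h⁻¹ * g * h) ^ k * h⁻¹).norm := by
          rw [conj_back, norm_pow_of_isCyclicallyReduced hg]
      _ ≤ h.norm + ((h⁻¹ * g * h) ^ k).norm + h⁻¹.norm :=
          (FreeGroup.norm_mul_le _ _).trans <|
            Nat.add_le_add_right (FreeGroup.norm_mul_le _ _) _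
      _ ≤ 2 * h.norm + k * (h⁻¹ * g * h).norm := by
          rw [norm_inv_eq]; linarith [norm_pow_le (h⁻¹ * g * h) k]
  by_contra! hlt
  nlinarith [pow_bound (2 * h.norm + 1)]

lemma isCyclicallyReduced_of_forall_norm_le (hmin : ∀ h, g.norm ≤ (h⁻¹ * g * h).norm) :
    IsCyclicallyReduced g.toWord := by
  set c := reduceCyclically.conjugator g.toWord
  set w := reduceCyclically g.toWord
  have hcw : c ++ w ++ invRev c = g.toWord :=
    reduceCyclically.conj_conjugator_reduceCyclically _
  have conj_eq : (mk c)⁻¹ * g * mk c = mk w := by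
    rw [← g.mk_toWord, ← hcw, ← mul_mk, ← mul_mk, ← inv_mk]; group
  have hlen : g.norm = c.length + (w.length + c.length) := by simp [FreeGroup.norm, ← hcw]
  have hle : g.norm ≤ w.length := (hmin (mk c)).trans (conj_eq ▸ norm_mk_le)
  have hc : c = [] := List.eq_nil_of_length_eq_zero (by omega)
  have hw : w = g.toWord := by simpa [hc] using hcw
  exact hw ▸ reduceCyclically.isCyclicallyReduced isReduced_toWord

lemma isCyclicallyReduced_toWord_iff :
    IsCyclicallyReduced g.toWord ↔ ∀ h, g.norm ≤ (h⁻¹ * g * h).norm :=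
  ⟨norm_le_norm_conj, isCyclicallyReduced_of_forall_norm_le⟩

lemma isCyclicallyReduced_toWord_inv (hg : IsCyclicallyReduced g.toWord) :
    IsCyclicallyReduced g⁻¹.toWord := by
  refine isCyclicallyReduced_of_forall_norm_le fun h => ?_
  have conj_inv : h⁻¹ * g⁻¹ * h = (h⁻¹ * g * h)⁻¹ := by group
  rw [conj_inv, norm_inv_eq, norm_inv_eq]
  exact norm_le_norm_conj hg h

end Words

/-! ### Translates and convexity of the trees -/

section Trees

open FreeGroup

variable {n : ℕ} {A : Subgroup (F n)} {a g h : F n} {l p : List (Letter n)}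

lemma cyclicallyReduced_iff : CyclicallyReduced g ↔ IsCyclicallyReduced g.toWord := by
  have ne_linv (x y : Letter n) : y ≠ linv x ↔ (y.1 = x.1 → y.2 = x.2) := by
    simp [linv, Prod.ext_iff]
  simp only [CyclicallyReduced, rword, ne_linv, isCyclicallyReduced_iff, isReduced_toWord,
    true_and, Option.mem_def]
  exact ⟨fun H y hy x hx => H x y hx hy, fun H x y hx hy => H y hy x hx⟩

lemma mem_conjSub : h ∈ conjSub g A ↔ g⁻¹ * h * g ∈ A := by
  exact Subgroup.mem_map_equiv.trans (by simp)

lemma conjSub_conjSub (g h : F n) (A : Subgroup (F n)) :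
    conjSub g (conjSub h A) = conjSub (g * h) A := by
  ext; simp [mem_conjSub, mul_assoc]

lemma conjSub_eq_self (hg : g ∈ A) : conjSub g A = A := by
  ext
  rw [mem_conjSub, A.mul_mem_cancel_right hg, A.mul_mem_cancel_left (A.inv_mem hg)]

lemma conjSub_ne_top (hA : A ≠ ⊤) (g : F n) : conjSub g A ≠ ⊤ := by
  contrapose! hA
  refine (Subgroup.eq_top_iff' A).2 fun x => ?_
  have hx : g * x * g⁻¹ ∈ conjSub g A := hA ▸ Subgroup.mem_top _
  simpa [mem_conjSub, mul_assoc] using hx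

lemma wlen_conj_eq_cycLen_iff :
    wlen (h⁻¹ * a * h) = cycLen a ↔ IsCyclicallyReduced (h⁻¹ * a * h).toWord := by
  rw [isCyclicallyReduced_toWord_iff]
  constructor
  · intro hmin k
    exact hmin.trans_le (Nat.sInf_le ⟨h * k, congrArg wlen (by group)⟩)
  · intro hmin
    refine le_antisymm (le_csInf ⟨_, 1, rfl⟩ ?_) (Nat.sInf_le ⟨h, rfl⟩)
    rintro _ ⟨k, rfl⟩
    exact (hmin (h⁻¹ * k)).trans_eq (congrArg wlen (by group))

lemma mem_treeVerts_iff :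
    h ∈ treeVerts A ↔ ∃ a ∈ A, a ≠ 1 ∧ IsCyclicallyReduced (h⁻¹ * a * h).toWord := by
  simp only [treeVerts, Set.mem_ofPred_eq, wlen_conj_eq_cycLen_iff]

lemma one_mem_treeVerts_iff :
    1 ∈ treeVerts A ↔ ∃ a ∈ A, a ≠ 1 ∧ IsCyclicallyReduced a.toWord := by
  simp [mem_treeVerts_iff]

lemma ne_bot_of_mem_treeVerts (hh : h ∈ treeVerts A) : A ≠ ⊥ := by
  obtain ⟨a, ha, ha1, -⟩ := hh
  exact A.ne_bot_iff_exists_ne_one.2 ⟨⟨a, ha⟩, by simpa using ha1⟩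

lemma mem_treeVerts_conjSub : h ∈ treeVerts (conjSub g A) ↔ g⁻¹ * h ∈ treeVerts A := by
  simp only [mem_treeVerts_iff]
  rw [← (MulAut.conj g).exists_congr_right]
  have conj_ne_one (a : F n) : ¬ g * (a * g⁻¹) = 1 ↔ ¬ a = 1 := by
    rw [← mul_assoc, conj_eq_one_iff]
  simp [mem_conjSub, mul_assoc, conj_ne_one]

lemma mul_mem_treeVerts_iff (ha : a ∈ A) : a * h ∈ treeVerts A ↔ h ∈ treeVerts A := by
  conv_lhs => rw [← conjSub_eq_self ha, mem_treeVerts_conjSub, inv_mul_cancel_left]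

lemma mem_treeVerts_of_mem (h1 : 1 ∈ treeVerts A) (ha : a ∈ A) : a ∈ treeVerts A := by
  simpa using (mul_mem_treeVerts_iff ha).2 h1

lemma mk_mem_treeVerts_of_isCyclicallyReduced (hl : IsCyclicallyReduced l) (hne : l ≠ [])
    (hlA : mk l ∈ A) (hp : p <+: l) : mk p ∈ treeVerts A := by
  obtain ⟨s, rfl⟩ := hp
  have rotate : (mk p)⁻¹ * mk (p ++ s) * mk p = mk (s ++ p) := by
    simp only [← mul_mk]; group
  refine mem_treeVerts_iff.2 ⟨_, hlA, fun h1 => hne ?_, ?_⟩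
  · rw [← toWord_mk_of_isReduced hl.isReduced, h1, toWord_one]
  · have hsp := isCyclicallyReduced_append_comm hl
    rwa [rotate, toWord_mk_of_isReduced hsp.isReduced]

lemma isReduced_invRev_append_of_notMem {x : Letter n} (ha : a ∈ A) (ha1 : a ≠ 1)
    (hcyc : IsCyclicallyReduced a.toWord) (hx : mk [x] ∉ treeVerts A) :
    IsReduced (invRev [x] ++ a.toWord) := by
  refine List.isChain_cons.2 ⟨fun y hy hxy => ?_, isReduced_toWord⟩
  have hyx : y ≠ x := by
    rintro rfl
    refine hx (mk_mem_treeVerts_of_isCyclicallyReduced hcyc (by simpa using ha1)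
      (by rwa [mk_toWord]) ?_)
    obtain ⟨t, ht⟩ := List.head?_eq_some_iff.1 hy
    exact ⟨t, ht.symm⟩
  grind

lemma isReduced_conj_of_notMem {x : Letter n} {t : List (Letter n)} (hl : IsReduced (x :: t))
    (ha : a ∈ A) (ha1 : a ≠ 1) (hcyc : IsCyclicallyReduced a.toWord) (hx : mk [x] ∉ treeVerts A) :
    IsReduced (invRev (x :: t) ++ a.toWord ++ (x :: t)) := by
  have hleft : IsReduced (invRev [x] ++ a.toWord) :=
    isReduced_invRev_append_of_notMem ha ha1 hcyc hx
  have hright : IsReduced (a.toWord ++ [x]) := by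
    simpa [toWord_inv] using isReduced_invRev (isReduced_invRev_append_of_notMem
      (A.inv_mem ha) (inv_ne_one.2 ha1) (isCyclicallyReduced_toWord_inv hcyc) hx)
  have hinv : IsReduced (invRev t ++ invRev [x]) := invRev_cons ▸ isReduced_invRev hl
  have hword : a.toWord ≠ [] := by simpa using ha1
  have hrest : IsReduced (a.toWord ++ [x] ++ t) := hright.append_overlap hl (by simp)
  have hfirst : IsReduced (invRev t ++ invRev [x] ++ a.toWord) :=
    hinv.append_overlap hleft (by simp [invRev])
  rw [invRev_cons]
  exact hfirst.append_overlap (by simpa using hrest) hword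

-- The axis of `a * (l c l⁻¹)` runs along the bridge `l` between the axes of `a` and `l c l⁻¹`.
lemma mk_mem_treeVerts_of_bridge {c : F n} (hl : l ≠ []) (ha : a ∈ A)
    (hc : mk l * c * (mk l)⁻¹ ∈ A) (hla : IsReduced (invRev l ++ a.toWord ++ l))
    (hlc : IsReduced (l ++ c.toWord ++ invRev l)) (hp : p <+: l) : mk p ∈ treeVerts A := by
  set w := a.toWord ++ l ++ c.toWord ++ invRev l
  have hinv : invRev l ≠ [] := fun h => hl (invRev_injective h)
  have hw : IsCyclicallyReduced w :=
    isCyclicallyReduced_append_of_isReduced hinv <| by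
      simpa using hla.append_overlap (L₃ := c.toWord ++ invRev l) (by simpa using hlc) hl
  have hwA : mk w ∈ A := by
    have hprod : mk w = a * (mk l * c * (mk l)⁻¹) := by
      simp only [w, ← mul_mk, mk_toWord, inv_mk, mul_assoc]
    exact hprod ▸ A.mul_mem ha hc
  have hpw : a.toWord ++ p <+: w := by
    simpa [w] using hp.trans (List.prefix_append l (c.toWord ++ invRev l))
  have hap := mk_mem_treeVerts_of_isCyclicallyReduced hw (by simp [w, hl]) hwA hpw
  rwa [← mul_mk, mk_toWord, mul_mem_treeVerts_iff ha] at hap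

lemma mk_mem_treeVerts_of_prefix_of_notMem {x y : Letter n} {t m : List (Letter n)}
    (hlx : l = x :: t) (hly : l = m ++ [y]) (hl : IsReduced l) (h1 : 1 ∈ treeVerts A)
    (hlA : mk l ∈ treeVerts A) (hx : mk [x] ∉ treeVerts A) (hy : mk m ∉ treeVerts A)
    (hp : p <+: l) : mk p ∈ treeVerts A := by
  obtain ⟨a, ha, ha1, hacyc⟩ := one_mem_treeVerts_iff.1 h1
  obtain ⟨b, hb, hb1, hbcyc⟩ := mem_treeVerts_iff.1 hlA
  have hinv : invRev l = (y.1, !y.2) :: invRev m := by simp [hly, invRev]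
  have hy' : mk [(y.1, !y.2)] ∉ treeVerts (conjSub (mk l)⁻¹ A) := by
    have cancel : mk l * mk [(y.1, !y.2)] = mk m := by
      rw [hly, ← mul_mk, mul_assoc]
      exact mul_eq_left.2 (mul_inv_cancel (mk [y]))
    rwa [mem_treeVerts_conjSub, inv_inv, cancel]
  have hla : IsReduced (invRev l ++ a.toWord ++ l) := by
    subst hlx
    exact isReduced_conj_of_notMem hl ha ha1 hacyc hx
  have hlb : IsReduced (l ++ ((mk l)⁻¹ * b * mk l).toWord ++ invRev l) := by
    have := isReduced_conj_of_notMem (hinv ▸ isReduced_invRev hl)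
      (a := (mk l)⁻¹ * b * mk l) (by simpa [mem_conjSub, mul_assoc, -inv_mk] using hb)
      (by simpa [mul_assoc, inv_mul_eq_one, eq_comm, -inv_mk] using hb1) hbcyc hy'
    rwa [← hinv, invRev_invRev] at this
  exact mk_mem_treeVerts_of_bridge (by simp [hlx]) ha
    (by simpa [mul_assoc, -inv_mk] using hb) hla hlb hp

theorem mk_mem_treeVerts_of_prefix (hl : IsReduced l) (h1 : 1 ∈ treeVerts A)
    (hlA : mk l ∈ treeVerts A) (hp : p <+: l) : mk p ∈ treeVerts A := by
  induction hN : l.length using Nat.strong_induction_on generalizing A l p with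
  | _ N ih =>
  subst hN
  rcases hlx : l with _ | ⟨x, t⟩
  · obtain rfl : p = [] := by simpa [hlx] using hp
    exact h1
  by_cases hx : mk [x] ∈ treeVerts A
  · subst hlx
    rcases List.prefix_cons_iff.1 hp with rfl | ⟨q, rfl, hq⟩
    · exact h1
    · have hqT := ih t.length (by simp) (A := conjSub (mk [x])⁻¹ A) (hl.infix ⟨[x], [], by simp⟩)
        (by simpa [mem_treeVerts_conjSub, -inv_mk] using hx)
        (by simpa [mem_treeVerts_conjSub, -inv_mk] using hlA) hq rfl
      simpa [mem_treeVerts_conjSub, -inv_mk] using hqT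
  obtain ⟨m, y, hly⟩ : ∃ m y, l = m ++ [y] :=
    ⟨_, _, (List.dropLast_append_getLast (by simp [hlx])).symm⟩
  by_cases hy : mk m ∈ treeVerts A
  · subst hly
    rcases List.prefix_concat_iff.1 hp with rfl | hpm
    · exact hlA
    · exact ih m.length (by simp) (hl.infix ⟨[], [y], by simp⟩) h1 hy hpm rfl
  · exact mk_mem_treeVerts_of_prefix_of_notMem hlx hly hl h1 hlA hx hy hp

lemma mem_treeVerts_of_toWord_prefix (h1 : 1 ∈ treeVerts A) (hh : h ∈ treeVerts A)
    (hgh : g.toWord <+: h.toWord) : g ∈ treeVerts A := by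
  simpa only [mk_toWord] using
    mk_mem_treeVerts_of_prefix isReduced_toWord h1 (by rwa [mk_toWord]) hgh

lemma pathIn_treeVerts_iff (h1 : 1 ∈ treeVerts A) :
    pathIn g (treeVerts A) ↔ g ∈ treeVerts A := by
  constructor
  · intro hpath
    simpa [wlen, rword, mk_toWord] using hpath (wlen g) le_rfl
  · intro hg m _
    exact mk_mem_treeVerts_of_prefix isReduced_toWord h1 (by rwa [mk_toWord])
      (List.take_prefix m g.toWord)

end Trees

/-! ### Subgroup systems -/

section Systems

open FreeGroup

variable {n r L : ℕ} {A : Fin r → Subgroup (F n)} {B B₁ B₂ : Subgroup (F n)} {g x y : F n}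
  {s u v : List (Letter n)}

lemma Malnormal.conjSub (hB : Malnormal B) (g : F n) : Malnormal (conjSub g B) := by
  intro x hx
  have hdisj := hB (g⁻¹ * x * g) (by rwa [mem_conjSub] at hx)
  refine (Subgroup.eq_bot_iff_forall _).2 fun b hb => ?_
  have hb' : g⁻¹ * b * g ∈ RelCurr.conjSub (g⁻¹ * x * g) B ⊓ B := by
    simpa [mem_conjSub, mul_assoc] using hb
  rw [hdisj, Subgroup.mem_bot] at hb'
  simpa [mul_assoc, inv_mul_eq_one, eq_comm] using hb'

lemma Malnormal.mem_of_conjSub_eq (hB : Malnormal B) (hne : B ≠ ⊥)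
    (hg : RelCurr.conjSub g B = B) : g ∈ B := by
  by_contra hgB
  exact hne (by simpa [hg] using hB g hgB)

lemma InSystem.conjSub (hB : InSystem A B) (g : F n) : InSystem A (conjSub g B) := by
  obtain ⟨i, h, rfl⟩ := hB
  exact ⟨i, g * h, conjSub_conjSub _ _ _⟩

lemma inSystem_self (A : Fin r → Subgroup (F n)) (i : Fin r) : InSystem A (A i) :=
  ⟨i, 1, (conjSub_eq_self (A i).one_mem).symm⟩

lemma exists_gammaMem_iff : (∃ i, GammaMem A i B) ↔ InSystem A B ∧ 1 ∈ treeVerts B := by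
  simp only [GammaMem, InSystem, exists_and_right]

lemma dist'_mul_left (g x y : F n) : dist' (g * x) (g * y) = dist' x y := by
  simp [dist', mul_assoc]

lemma dist'_one_left (x : F n) : dist' 1 x = wlen x := by
  simp [dist']

lemma DiamBound.eq_of_lt_dist' (hdiam : DiamBound A L) (h₁ : InSystem A B₁) (h₂ : InSystem A B₂)
    (hx₁ : x ∈ treeVerts B₁) (hx₂ : x ∈ treeVerts B₂) (hy₁ : y ∈ treeVerts B₁)
    (hy₂ : y ∈ treeVerts B₂) (hxy : L < dist' x y) : B₁ = B₂ := by
  by_contra hne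
  exact hxy.not_ge (hdiam B₁ B₂ h₁ h₂ hne x ⟨hx₁, hx₂⟩ y ⟨hy₁, hy₂⟩)

lemma DiamBound.mem_of_lt_dist' (hdiam : DiamBound A L) (hmal : ∀ i, Malnormal (A i))
    (hB : InSystem A B) (hx : x ∈ treeVerts B) (hy : y ∈ treeVerts B)
    (hgx : g * x ∈ treeVerts B) (hgy : g * y ∈ treeVerts B) (hxy : L < dist' x y) : g ∈ B := by
  have hmalB : Malnormal B := by
    obtain ⟨i, h, rfl⟩ := hB
    exact (hmal i).conjSub h
  refine hmalB.mem_of_conjSub_eq (ne_bot_of_mem_treeVerts hx) ?_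
  exact hdiam.eq_of_lt_dist' (hB.conjSub g) hB (x := g * x) (y := g * y)
    (by simpa [mem_treeVerts_conjSub] using hx) hgx
    (by simpa [mem_treeVerts_conjSub] using hy) hgy (by rwa [dist'_mul_left])

/-- Two vertices of the Cayley tree lie in the tree of one and the same subgroup of the system.
By convexity of the trees, this says that the geodesic joining them lies in such a tree; for the
vertices `1` and `w` it negates the condition defining `𝒞`. -/
def InCommonTree (A : Fin r → Subgroup (F n)) (x y : F n) : Prop :=
  ∃ B, InSystem A B ∧ x ∈ treeVerts B ∧ y ∈ treeVerts B

lemma InCommonTree.mul_left (h : InCommonTree A x y) (g : F n) :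
    InCommonTree A (g * x) (g * y) := by
  obtain ⟨B, hB, hx, hy⟩ := h
  exact ⟨conjSub g B, hB.conjSub g, by simpa [mem_treeVerts_conjSub] using hx,
    by simpa [mem_treeVerts_conjSub] using hy⟩

lemma inCommonTree_one_of_mem {i : Fin r} (h1 : 1 ∈ treeVerts (A i)) (hg : g ∈ A i) :
    InCommonTree A 1 g :=
  ⟨A i, inSystem_self A i, h1, mem_treeVerts_of_mem h1 hg⟩

lemma InCommonTree.of_infix (hred : IsReduced v) (h : InCommonTree A 1 (mk v)) (hs : s <:+: v) :
    InCommonTree A 1 (mk s) := by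
  obtain ⟨u, t, rfl⟩ := hs
  obtain ⟨B, hB, h1, hv⟩ := h
  have hu : mk u ∈ treeVerts B := mk_mem_treeVerts_of_prefix hred h1 hv ⟨s ++ t, by simp⟩
  have hus : mk (u ++ s) ∈ treeVerts B := mk_mem_treeVerts_of_prefix hred h1 hv ⟨t, rfl⟩
  have hcommon : InCommonTree A (mk u) (mk (u ++ s)) := ⟨B, hB, hu, hus⟩
  simpa [← mul_mk, -inv_mk] using hcommon.mul_left (mk u)⁻¹

lemma InCommonTree.append (hdiam : DiamBound A L) (hred : IsReduced (u ++ s ++ v))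
    (hs : L < s.length) (hus : InCommonTree A 1 (mk (u ++ s)))
    (hsv : InCommonTree A 1 (mk (s ++ v))) : InCommonTree A 1 (mk (u ++ s ++ v)) := by
  obtain ⟨B₁, hB₁, h1, hus₁⟩ := hus
  obtain ⟨B₂, hB₂, h1₂, hsv₂⟩ := hsv
  have hredus : IsReduced (u ++ s) := hred.infix ⟨[], v, by simp⟩
  have hredsv : IsReduced (s ++ v) := hred.infix ⟨u, [], by simp⟩
  have hs₂ : mk s ∈ treeVerts B₂ := mk_mem_treeVerts_of_prefix hredsv h1₂ hsv₂ ⟨v, rfl⟩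
  have hdist : dist' (mk u) (mk (u ++ s)) = s.length := by
    have hreds : IsReduced s := hredus.infix ⟨u, [], by simp⟩
    simp [dist', ← mul_mk, wlen, rword, hreds.reduce_eq, -inv_mk]
  obtain rfl : B₁ = conjSub (mk u) B₂ :=
    hdiam.eq_of_lt_dist' hB₁ (hB₂.conjSub _) (x := mk u) (y := mk (u ++ s))
      (mk_mem_treeVerts_of_prefix hredus h1 hus₁ ⟨s, rfl⟩)
      (by simpa [mem_treeVerts_conjSub, -inv_mk] using h1₂) hus₁
      (by simpa [mem_treeVerts_conjSub, ← mul_mk, -inv_mk] using hs₂) (hdist ▸ hs)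
  exact ⟨_, hB₁, h1, by simpa [mem_treeVerts_conjSub, ← mul_mk, mul_assoc, -inv_mk] using hsv₂⟩

lemma forall_not_pathIn_iff :
    (∀ (i : Fin r) (B : Subgroup (F n)), GammaMem A i B → ¬ pathIn g (treeVerts B)) ↔
      ¬ InCommonTree A 1 g := by
  constructor
  · rintro hpath ⟨B, hB, h1, hg⟩
    obtain ⟨i, hi⟩ := exists_gammaMem_iff.2 ⟨hB, h1⟩
    exact hpath i B hi ((pathIn_treeVerts_iff h1).2 hg)
  · intro hg i B hi hpath
    obtain ⟨hB, h1⟩ := exists_gammaMem_iff.1 ⟨i, hi⟩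
    exact hg ⟨B, hB, h1, (pathIn_treeVerts_iff h1).1 hpath⟩

lemma mem_Ccal_iff : g ∈ Ccal A L ↔ wlen g = L + 2 ∧ ¬ InCommonTree A 1 g :=
  and_congr_right' forall_not_pathIn_iff

lemma not_inCommonTree_of_mem_FmA (hg : g ∈ FmA A L) : ¬ InCommonTree A 1 g := by
  obtain ⟨x, hx, hxg⟩ := hg
  intro hcommon
  refine (mem_Ccal_iff.1 hx).2 ?_
  simpa only [rword, mk_toWord] using
    InCommonTree.of_infix isReduced_toWord (g.mk_toWord.symm ▸ hcommon) hxg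

lemma inCommonTree_of_forall_infix (hdiam : DiamBound A L) (hv : IsReduced v)
    (hlen : L + 2 ≤ v.length)
    (hshort : ∀ s, s <:+: v → s.length = L + 2 → InCommonTree A 1 (mk s)) :
    InCommonTree A 1 (mk v) := by
  induction v using List.reverseRecOn with
  | nil => simp at hlen
  | append_singleton v b ih =>
    rcases hlen.eq_or_lt with heq | hlt
    · exact hshort _ (List.infix_refl _) heq.symm
    have hvlen : L + 2 ≤ v.length := by simpa using Nat.lt_succ_iff.1 (by simpa using hlt)
    have hvb : v <:+: v ++ [b] := ⟨[], [b], by simp⟩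
    have hcommon := ih (hv.infix hvb) hvlen fun s hs => hshort s (hs.trans hvb)
    obtain ⟨u, s, rfl, hs⟩ : ∃ u s, v = u ++ s ∧ s.length = L + 1 :=
      ⟨v.take (v.length - (L + 1)), v.drop (v.length - (L + 1)), by simp, by
        rw [List.length_drop]; omega⟩
    exact InCommonTree.append hdiam hv (by omega) hcommon
      (hshort (s ++ [b]) ⟨u, [], by simp⟩ (by simp [hs]))

lemma mem_FmA_of_not_inCommonTree (hdiam : DiamBound A L) (hlen : L + 2 ≤ wlen g)
    (hg : ¬ InCommonTree A 1 g) : g ∈ FmA A L := by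
  contrapose! hg
  rw [← g.mk_toWord]
  refine inCommonTree_of_forall_infix hdiam isReduced_toWord hlen fun s hs hslen => ?_
  have hsword : (mk s).toWord = s := toWord_mk_of_isReduced (isReduced_toWord.infix hs)
  by_contra hsC
  exact hg ⟨mk s, mem_Ccal_iff.2 ⟨by rw [wlen, rword, hsword, hslen], hsC⟩,
    by rwa [rword, hsword]⟩

/-! ### Powers and nonemptiness of `𝒞` -/

theorem exists_pow_mem_FmA (hmal : ∀ i, Malnormal (A i)) (hdiam : DiamBound A L)
    (hg : ¬ Peripheral A g) (hcyc : CyclicallyReduced g) : ∃ m, 1 ≤ m ∧ g ^ m ∈ FmA A L := by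
  rw [cyclicallyReduced_iff] at hcyc
  have hpos : 0 < g.norm := Nat.pos_of_ne_zero fun h => hg (Or.inl (norm_eq_zero.1 h))
  have hlen (k : ℕ) : k ≤ wlen (g ^ k) :=
    (Nat.le_mul_of_pos_right k hpos).trans_eq (norm_pow_of_isCyclicallyReduced hcyc k).symm
  refine ⟨L + 2, by omega, mem_FmA_of_not_inCommonTree hdiam (hlen _) ?_⟩
  rintro ⟨B, hB, h1, hpow⟩
  have hpow_le {k : ℕ} (hk : k ≤ L + 2) : g ^ k ∈ treeVerts B :=
    mem_treeVerts_of_toWord_prefix h1 hpow (toWord_pow_prefix_toWord_pow hcyc hk)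
  refine hg (Or.inr ⟨B, hB, ?_⟩)
  refine hdiam.mem_of_lt_dist' hmal hB h1 (hpow_le (k := L + 1) (by omega)) ?_ ?_ ?_
  · simpa using hpow_le (k := 1) (by omega)
  · simpa [← pow_succ'] using hpow
  · rw [dist'_one_left]
    exact hlen (L + 1)

lemma exists_inSystem_mem_of_Ccal_eq_empty (hmal : ∀ i, Malnormal (A i)) (hdiam : DiamBound A L)
    (hC : Ccal A L = ∅) (hv : IsCyclicallyReduced v) (hne : v ≠ []) :
    ∃ B, InSystem A B ∧ mk v ∈ B ∧ ∀ p, p <+: v → mk p ∈ treeVerts B := by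
  have hword : (mk v).toWord = v := toWord_mk_of_isReduced hv.isReduced
  have hper : Peripheral A (mk v) := by
    by_contra hnot
    obtain ⟨m, -, x, hx, -⟩ :=
      exists_pow_mem_FmA hmal hdiam hnot (cyclicallyReduced_iff.2 (hword.symm ▸ hv))
    simp [hC] at hx
  rcases hper with h1 | ⟨B, hB, hvB⟩
  · exact absurd (by simpa [hword] using congrArg toWord h1) hne
  · exact ⟨B, hB, hvB, fun p hp => mk_mem_treeVerts_of_isCyclicallyReduced hv hne hvB hp⟩

-- If `𝒞 = ∅`, then `a ∈ B`, `d ∈ B'` and `a ^ (L + 1) * d ^ (L + 1) ∈ B''` for subgroups of the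
-- system; `T_B''` shares `a ^ (L + 1)` with `T_B`, whence `B = B''`, then `d ^ (L + 1) ∈ B` and
-- `B = B'`.
lemma exists_inSystem_forall_of_mem_of_Ccal_eq_empty (a : Fin n)
    (hmal : ∀ i, Malnormal (A i)) (hdiam : DiamBound A L) (hC : Ccal A L = ∅) :
    ∃ B, InSystem A B ∧ ∀ d, of d ∈ B := by
  have hgen (d : Fin n) : ∃ B, InSystem A B ∧ of d ∈ B ∧ 1 ∈ treeVerts B := by
    obtain ⟨B, hB, hdB, hT⟩ := exists_inSystem_mem_of_Ccal_eq_empty hmal hdiam hC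
      (v := [(d, true)]) (by simp) (by simp)
    exact ⟨B, hB, hdB, hT [] List.nil_prefix⟩
  have hfar (d : Fin n) : L < dist' 1 (of d ^ (L + 1)) := by
    rw [dist'_one_left]
    exact (Nat.lt_succ_self L).trans_eq (norm_of_pow d (L + 1)).symm
  have hmk (d : Fin n) : mk (List.replicate (L + 1) (d, true)) = of d ^ (L + 1) := by
    rw [← toWord_of_pow, mk_toWord]
  obtain ⟨B, hB, haB, h1⟩ := hgen a
  have haT := mem_treeVerts_of_mem h1 (B.pow_mem haB (L + 1))
  refine ⟨B, hB, fun d => ?_⟩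
  obtain ⟨B', hB', hdB', h1'⟩ := hgen d
  obtain ⟨B'', hB'', hadB, hT⟩ := exists_inSystem_mem_of_Ccal_eq_empty hmal hdiam hC
    (v := List.replicate (L + 1) (a, true) ++ List.replicate (L + 1) (d, true))
    (isCyclicallyReduced_of_forall_snd (by simp [or_imp, forall_and])) (by simp)
  obtain rfl : B = B'' := hdiam.eq_of_lt_dist' hB hB'' h1 (hT [] List.nil_prefix) haT
    (hmk a ▸ hT _ (List.prefix_append _ _)) (hfar a)
  have hdB : of d ^ (L + 1) ∈ B := by
    rwa [← mul_mk, hmk, hmk, B.mul_mem_cancel_left (B.pow_mem haB _)] at hadB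
  obtain rfl : B = B' := hdiam.eq_of_lt_dist' hB hB' h1 h1' (mem_treeVerts_of_mem h1 hdB)
    (mem_treeVerts_of_mem h1' (B'.pow_mem hdB' _)) (hfar d)
  exact hdB'

theorem Ccal_nonempty [NeZero n] (hmal : ∀ i, Malnormal (A i)) (htop : ∀ i, A i ≠ ⊤)
    (hdiam : DiamBound A L) : (Ccal A L).Nonempty := by
  by_contra hC
  obtain ⟨B, ⟨i, g, rfl⟩, hgen⟩ := exists_inSystem_forall_of_mem_of_Ccal_eq_empty 0 hmal hdiam
    (Set.not_nonempty_iff_eq_empty.1 hC)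
  refine conjSub_ne_top (htop i) g (top_le_iff.1 ?_)
  rw [← FreeGroup.closure_range_of, Subgroup.closure_le]
  rintro _ ⟨d, rfl⟩
  exact hgen d

end Systems

theorem statement_3_general {n r L : ℕ} [NeZero n] {A : Fin r → Subgroup (F n)}
    (hmal : ∀ i, Malnormal (A i)) (htop : ∀ i, A i ≠ ⊤) (hdiam : DiamBound A L)
    (hbase : ∀ i, (1 : F n) ∈ treeVerts (A i)) :
    (Ccal A L).Nonempty ∧
      (∀ g : F n, L + 2 ≤ wlen g →
        (∀ (i : Fin r) (B : Subgroup (F n)), GammaMem A i B → ¬ pathIn g (treeVerts B)) →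
        g ∈ FmA A L) ∧
      (∀ g : F n, ¬ Peripheral A g → CyclicallyReduced g →
        ∃ m : ℕ, 1 ≤ m ∧ g ^ m ∈ FmA A L) ∧
      ∀ w ∈ FmA A L, ∀ i : Fin r, w ∉ A i :=
  ⟨Ccal_nonempty hmal htop hdiam,
    fun _ hlen hpath => mem_FmA_of_not_inCommonTree hdiam hlen (forall_not_pathIn_iff.1 hpath),
    fun _ => exists_pow_mem_FmA hmal hdiam,
    fun _ hw i hwA => not_inCommonTree_of_mem_FmA hw (inCommonTree_one_of_mem (hbase i) hwA)⟩

/-- The set 𝒞 is nonempty; long words avoiding the trees contain an element of 𝒞 as a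
subword; nonperipheral cyclically reduced elements have a power in F_n − 𝒜; and
elements of F_n − 𝒜 lie in no A_i. -/
theorem statement_3 (n r L : ℕ) (hn : 2 ≤ n) (A : Fin r → Subgroup (F n))
    (hsys : IsSystem A) (hmal : SystemMalnormal A) (hL : 1 ≤ L)
    (hdiam : DiamBound A L) (hbase : ∀ i, (1 : F n) ∈ treeVerts (A i)) :
    (Ccal A L).Nonempty ∧
      (∀ g : F n, L + 2 ≤ wlen g →
        (∀ (i : Fin r) (B : Subgroup (F n)), GammaMem A i B → ¬ pathIn g (treeVerts B)) →
        g ∈ FmA A L) ∧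
      (∀ g : F n, ¬ Peripheral A g → CyclicallyReduced g →
        ∃ m : ℕ, 1 ≤ m ∧ g ^ m ∈ FmA A L) ∧
      ∀ w ∈ FmA A L, ∀ i : Fin r, w ∉ A i := by
  have : NeZero n := ⟨by omega⟩
  exact statement_3_general hmal.1 hsys.2.2 hdiam hbase

end RelCurr
end
end
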